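/- arXiv:1502.05127 — 2 statements merged into one kernel-verified Lean document; each statement's English description precedes it below -/
import Mathlib

section
/- Let f be analytic and injective on 𝔻 with f(0) = 0, and suppose that the disk {w ∈ ℂ : |w| < ρ} is contained in f(𝔻) for some ρ > 0. Then for every r with 0 < r < 1, the disk {w ∈ ℂ : |w| < ρr} is contained in f({z : |z| < r}). Consequently, for every a ∈ 𝔻 \ {0}, the disk {w : |w| < ρ} is contained in the image of 𝔻 under the map z ↦ f(az)/a. -/
/-- The unit disk `{z : ℂ | |z| < 1}`. -/
noncomputable def unitDisk : Set ℂ := Metric.ball 0 1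

/-- The extremal convex function of order `α`:
`k_α(z) = ((1-z)^(2α-1) - 1)/(1-2α)` (so that `k_α(0)=0`, `k_α'(0)=1`),
with `k_{1/2}(z) = -log(1-z)` (principal branches). -/
noncomputable def kfun (α : ℝ) (z : ℂ) : ℂ :=
  if α = 1 / 2 then -Complex.log (1 - z)
  else ((1 - z) ^ ((2 * α - 1 : ℝ) : ℂ) - 1) / ((1 - 2 * α : ℝ) : ℂ)

/-- `h_α(z) = k_α(z)/z` for `z ≠ 0`, `h_α(0) = 1`. -/
noncomputable def hfun (α : ℝ) (z : ℂ) : ℂ :=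
  if z = 0 then 1 else kfun α z / z

/-- `f ∈ K(α)`: `f` is analytic on the unit disk, normalized by `f(0)=0`, `f'(0)=1`,
with nonvanishing derivative and `Re(1 + z f''(z)/f'(z)) > α` on the disk. -/
def IsConvexOfOrder (α : ℝ) (f : ℂ → ℂ) : Prop :=
  DifferentiableOn ℂ f unitDisk ∧ f 0 = 0 ∧ deriv f 0 = 1 ∧
    ∀ z ∈ unitDisk, deriv f z ≠ 0 ∧
      α < (1 + z * deriv (deriv f) z / deriv f z).re

/-!
The inverse of a univalent function is holomorphic, so `f⁻¹` maps the disk of radius `ρ`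
holomorphically into `𝔻` and fixes `0`. The Schwarz lemma gives `|f⁻¹(w)| ≤ |w| / ρ`, which is less
than `r` when `|w| < ρ r`. The image of `𝔻` under `z ↦ f (a z) / a` is `a⁻¹ f({|z| < |a|})`, so the
second claim is the first one for `r = |a|`, rescaled.
-/

open Filter Metric Set Topology
open scoped Pointwise

section HolomorphicInverse

theorem eventually_deriv_ne_zero_of_frequently_ne {𝕜 F : Type*} [RCLike 𝕜]
    [NormedAddCommGroup F] [NormedSpace 𝕜 F] [CompleteSpace F] {f : 𝕜 → F} {z : 𝕜}
    (hf : AnalyticAt 𝕜 f z) (hne : ∃ᶠ y in 𝓝 z, f y ≠ f z) :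
    ∀ᶠ y in 𝓝[≠] z, deriv f y ≠ 0 := by
  refine hf.deriv.eventually_eq_zero_or_eventually_ne_zero.resolve_left fun hzero => ?_
  obtain ⟨ε, hε, hball⟩ := eventually_nhds_iff_ball.1 (hzero.and hf.eventually_analyticAt)
  refine hne (mem_of_superset (ball_mem_nhds z hε) fun y hy => not_not_intro ?_)
  exact isOpen_ball.is_const_of_deriv_eq_zero (convex_ball z ε).isPreconnected
    (fun x hx => (hball x hx).2.differentiableAt.differentiableWithinAt)
    (fun x hx => (hball x hx).1) hy (mem_ball_self hε)

theorem eventually_ne_of_injOn {X Y : Type*} [TopologicalSpace X] {f : X → Y} {U : Set X} {x : X}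
    (hinj : InjOn f U) (hU : U ∈ 𝓝 x) : ∀ᶠ y in 𝓝[≠] x, f y ≠ f x := by
  filter_upwards [nhdsWithin_le_nhds hU, self_mem_nhdsWithin] with y hyU hyx
  exact hinj.ne hyU (mem_of_mem_nhds hU) hyx

variable {U : Set ℂ} {f : ℂ → ℂ}

theorem isOpenMap_domRestrict_of_injOn (hU : IsOpen U) (hf : DifferentiableOn ℂ f U)
    (hinj : InjOn f U) : IsOpenMap (U.domRestrict f) := by
  refine IsOpenMap.of_nhds_le fun ⟨z, hz⟩ => ?_
  have hzU : U ∈ 𝓝 z := hU.mem_nhds hz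
  have hne : ∃ᶠ y in 𝓝 z, f y ≠ f z :=
    (eventually_ne_of_injOn hinj hzU).frequently.filter_mono nhdsWithin_le_nhds
  have hopen : 𝓝 (f z) ≤ map f (𝓝 z) :=
    (hf.analyticAt hzU).eventually_constant_or_nhds_le_map_nhds.resolve_left
      fun hconst => hne (hconst.mono fun _ => not_not_intro)
  rwa [← hU.isOpenEmbedding_subtypeVal.map_nhds_eq ⟨z, hz⟩, map_map] at hopen

theorem exists_openPartialHomeomorph_of_injOn (hU : IsOpen U) (hf : DifferentiableOn ℂ f U)
    (hinj : InjOn f U) :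
    ∃ e : OpenPartialHomeomorph ℂ ℂ, ⇑e = f ∧ e.source = U ∧ e.target = f '' U :=
  ⟨.ofContinuousOpenRestrict (hinj.toPartialEquiv f U) hf.continuousOn
    (isOpenMap_domRestrict_of_injOn hU hf hinj) hU, rfl, rfl, rfl⟩

theorem differentiableOn_symm_of_differentiableOn (e : OpenPartialHomeomorph ℂ ℂ)
    (he : DifferentiableOn ℂ e e.source) : DifferentiableOn ℂ e.symm e.target := by
  intro w hw
  have hz : e.symm w ∈ e.source := e.map_target hw
  have hne : ∃ᶠ y in 𝓝 (e.symm w), e y ≠ e (e.symm w) :=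
    (e.eventually_ne_nhdsWithin hz).frequently.filter_mono nhdsWithin_le_nhds
  have hderiv : ∀ᶠ y in 𝓝[≠] e.symm w, deriv e y ≠ 0 :=
    eventually_deriv_ne_zero_of_frequently_ne (he.analyticAt (e.open_source.mem_nhds hz)) hne
  have hcont : ContinuousAt e.symm w := e.symm.continuousAt hw
  have hlim : Tendsto e.symm (𝓝[≠] w) (𝓝[≠] e.symm w) :=
    tendsto_nhdsWithin_iff.2
      ⟨hcont.tendsto.mono_left nhdsWithin_le_nhds, e.symm.eventually_ne_nhdsWithin hw⟩
  have hdiff : ∀ᶠ v in 𝓝[≠] w, DifferentiableAt ℂ e.symm v := by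
    filter_upwards [hlim.eventually hderiv, nhdsWithin_le_nhds (e.open_target.mem_nhds hw)]
      with v hv hvt
    have hev := he.differentiableAt (e.open_source.mem_nhds (e.map_target hvt))
    exact (e.hasDerivAt_symm hvt hv hev.hasDerivAt).differentiableAt
  -- `deriv e` vanishes near `e.symm w` at most at that point: `w` is a removable singularity.
  exact (Complex.analyticAt_of_differentiable_on_punctured_nhds_of_continuousAt hdiff
    hcont).differentiableAt.differentiableWithinAt

end HolomorphicInverse

theorem ball_subset_image_ball_of_leftInvOn {E F : Type*} [NormedAddCommGroup E]
    [NormedSpace ℂ E] [NormedAddCommGroup F] [NormedSpace ℂ F] {f : E → F} {g : F → E} {c : E}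
    {R ρ r : ℝ} (hg : DifferentiableOn ℂ g (ball (f c) ρ)) (hgf : LeftInvOn g f (ball c R))
    (hcov : ball (f c) ρ ⊆ f '' ball c R) (hr₀ : 0 ≤ r) (hr₁ : r ≤ 1) :
    ball (f c) (ρ * r) ⊆ f '' ball c (R * r) := by
  intro w hw
  have hρr : 0 < ρ * r := pos_of_mem_ball hw
  have hρ : 0 < ρ := pos_of_mul_pos_left hρr hr₀
  have hwρ : w ∈ ball (f c) ρ := ball_subset_ball (mul_le_of_le_one_right hρ.le hr₁) hw
  obtain ⟨z, hz, rfl⟩ := hcov hwρ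
  have hR : 0 < R := pos_of_mem_ball hz
  have hgc : g (f c) = c := hgf (mem_ball_self hR)
  have hmaps : MapsTo g (ball (f c) ρ) (closedBall (g (f c)) R) := by
    rw [hgc]
    exact (hgf.mapsTo Subset.rfl).mono hcov ball_subset_closedBall
  refine ⟨z, ?_, rfl⟩
  calc
    dist z c = dist (g (f z)) (g (f c)) := by rw [hgf hz, hgc]
    _ ≤ R / ρ * dist (f z) (f c) := Complex.dist_le_div_mul_dist_of_mapsTo_ball hg hmaps hwρ
    _ < R / ρ * (ρ * r) := by gcongr; exact hw
    _ = R * r := by field_simp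

theorem ball_subset_image_ball_of_injOn {f : ℂ → ℂ} {c : ℂ} {R ρ r : ℝ}
    (hf : DifferentiableOn ℂ f (ball c R)) (hinj : InjOn f (ball c R))
    (hcov : ball (f c) ρ ⊆ f '' ball c R) (hr₀ : 0 ≤ r) (hr₁ : r ≤ 1) :
    ball (f c) (ρ * r) ⊆ f '' ball c (R * r) := by
  obtain ⟨e, rfl, hsource, htarget⟩ := exists_openPartialHomeomorph_of_injOn isOpen_ball hf hinj
  have hsymm : DifferentiableOn ℂ e.symm e.target :=
    differentiableOn_symm_of_differentiableOn e (hsource ▸ hf)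
  exact ball_subset_image_ball_of_leftInvOn (hsymm.mono (htarget ▸ hcov))
    (hsource ▸ e.leftInvOn) hcov hr₀ hr₁

theorem image_rescale_ball {𝕜 : Type*} [NormedField 𝕜] (f : 𝕜 → 𝕜) {a : 𝕜} (ha : a ≠ 0)
    (s : ℝ) : (fun z => f (a * z) / a) '' ball 0 s = a⁻¹ • f '' ball 0 (‖a‖ * s) := by
  have hball : ball (0 : 𝕜) (‖a‖ * s) = (a * ·) '' ball 0 s := by
    rw [← smul_zero a, ← _root_.smul_ball ha, smul_zero]
    rfl
  rw [hball, ← image_smul, image_image, image_image]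
  simp only [smul_eq_mul, div_eq_inv_mul]

theorem ball_subset_image_rescale_iff {𝕜 : Type*} [NormedField 𝕜] {f : 𝕜 → 𝕜} {a : 𝕜}
    (ha : a ≠ 0) {ρ s : ℝ} :
    ball 0 ρ ⊆ (fun z => f (a * z) / a) '' ball 0 s ↔
      ball 0 (‖a‖ * ρ) ⊆ f '' ball 0 (‖a‖ * s) := by
  rw [image_rescale_ball f ha, ← smul_set_subset_iff₀ ha, _root_.smul_ball ha, smul_zero]

/-- if `f` is analytic and injective on `𝔻`, `f(0)=0` and `f(𝔻) ⊇ {|w|<ρ}`,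
then `f({|z|<r}) ⊇ {|w|<ρr}` for `0<r<1`, and consequently `{|w|<ρ}` is contained in the
image of `𝔻` under `z ↦ f(az)/a` for every `a ∈ 𝔻 \ {0}`. -/
theorem covering_lemma (f : ℂ → ℂ) (hf : DifferentiableOn ℂ f unitDisk)
    (hinj : Set.InjOn f unitDisk) (hf0 : f 0 = 0)
    (ρ : ℝ) (hρ : 0 < ρ) (hcov : Metric.ball (0 : ℂ) ρ ⊆ f '' unitDisk) :
    (∀ r : ℝ, 0 < r → r < 1 →
      Metric.ball (0 : ℂ) (ρ * r) ⊆ f '' Metric.ball (0 : ℂ) r) ∧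
    ∀ a ∈ unitDisk, a ≠ 0 →
      Metric.ball (0 : ℂ) ρ ⊆ (fun z => f (a * z) / a) '' unitDisk := by
  have hsub : ∀ r : ℝ, 0 < r → r < 1 →
      ball (0 : ℂ) (ρ * r) ⊆ f '' ball (0 : ℂ) r := by
    intro r hr₀ hr₁
    simpa only [hf0, one_mul] using
      ball_subset_image_ball_of_injOn hf hinj (hf0.symm ▸ hcov) hr₀.le hr₁.le
  refine ⟨hsub, fun a ha ha₀ => (ball_subset_image_rescale_iff ha₀).2 ?_⟩
  rw [mul_comm, mul_one]
  exact hsub ‖a‖ (norm_pos_iff.2 ha₀) (mem_ball_zero_iff.1 ha)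
end

section
/- Let ρ > 0 and let f, g ∈ K(0) (normalized convex univalent functions on 𝔻). Suppose that (1) both f(𝔻) and g(𝔻) contain the disk {w : |w| < ρ}, and (2) |Im(f(z)/z)| < ρ and |Im(g(z)/z)| < ρ for all z ∈ 𝔻 \ {0}. Then h = (f+g)/2 is injective on 𝔻 and h(𝔻) is starlike with respect to 0; that is, (f+g)/2 ∈ S*. -/
/-!
The tangent direction of the image under `f` of a circle `|z| = s` makes exactly one turn, so the
tangent at `f z` is a supporting line of the image of the disk `|z| ≤ s`. By the Schwarz lemma for
`f⁻¹` that image contains the disk of radius `ρ * s` about `0`, so the tangent stays at distance at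
least `ρ * s` from `0`: this reads `ρ * |f'(z)| ≤ Re (f'(z) * conj (f(z) / z))`. Together with
`|Im (f(z) / z)| < ρ` it forces `Re (f(z) / z)` and `Re f'(z)` to be nonzero of the same sign, hence
positive, since `f(z) / z` equals `1` at the origin. So `Re (f'(z) * conj (g(z) / z))` is larger
than `-ρ * |f'(z)|`, and `Re (f'(z) * conj ((f(z) + g(z)) / z)) > 0`. Adding the same inequality
with `f` and `g` exchanged gives `Re (z * h'(z) / h(z)) > 0` for `h = (f + g) / 2`. Then `h` is
injective, since `log h` has a derivative of positive real part with respect to `log z`, and its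
image is starlike, since moving `h(z)` straight towards `0` moves `z` towards `0`.
-/

open AffineMap (lineMap)
open Complex ComplexConjugate Filter Metric Set Topology
open scoped Real RealInnerProductSpace

lemma inner_add_mul_norm_le_of_forall_mem_ball {E : Type*} [NormedAddCommGroup E]
    [InnerProductSpace ℝ E] {p n : E} {R M : ℝ} (hR : 0 < R) (h : ∀ w ∈ ball p R, ⟪n, w⟫ ≤ M) :
    ⟪n, p⟫ + R * ‖n‖ ≤ M := by
  rcases eq_or_ne n 0 with rfl | hn
  · simpa using h p (mem_ball_self hR)
  have hclosed : closedBall p R ⊆ {w | ⟪n, w⟫ ≤ M} :=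
    closure_ball p hR.ne' ▸ closure_minimal h (isClosed_le (by fun_prop) continuous_const)
  have hn' : ‖n‖ ≠ 0 := norm_ne_zero_iff.2 hn
  have hmem : p + (R / ‖n‖) • n ∈ closedBall p R := by
    simp [norm_smul, abs_of_pos hR, hn']
  calc ⟪n, p⟫ + R * ‖n‖ = ⟪n, p + (R / ‖n‖) • n⟫ := by
        rw [inner_add_right, real_inner_smul_right, real_inner_self_eq_norm_sq]
        field_simp
    _ ≤ M := hclosed hmem

lemma starConvex_of_isClosed_of_frequently_lineMap_mem {E : Type*} [AddCommGroup E] [Module ℝ E]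
    [TopologicalSpace E] [IsTopologicalAddGroup E] [ContinuousSMul ℝ E] {K : Set E} {p : E}
    (hK : IsClosed K) (h : ∀ w ∈ K, ∃ᶠ τ in 𝓝[>] (0 : ℝ), lineMap w p τ ∈ K) :
    StarConvex ℝ p K := by
  rw [starConvex_iff_segment_subset]
  intro w hw
  rw [segment_symm, segment_eq_image_lineMap, image_subset_iff]
  have hS : IsClosed ((fun τ : ℝ => lineMap w p τ) ⁻¹' K) :=
    hK.preimage AffineMap.lineMap_continuous
  refine (hS.inter isClosed_Icc).Icc_subset_of_forall_exists_gt (by simpa) ?_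
  rintro x ⟨hx, -, hx1⟩ y (hy : x < y)
  have hx1' : 0 < 1 - x := sub_pos.2 hx1
  have hsmall : ∀ᶠ σ in 𝓝[>] (0 : ℝ), σ ∈ Ioc 0 ((y - x) / (1 - x)) :=
    Ioc_mem_nhdsGT (div_pos (sub_pos.2 hy) hx1')
  obtain ⟨σ, hσK, hσ0, hσ⟩ := ((h _ hx).and_eventually hsmall).exists
  rw [le_div_iff₀ hx1'] at hσ
  refine ⟨x + σ * (1 - x), ?_, by nlinarith, by linarith⟩
  rw [mem_preimage]
  convert! hσK using 1
  simp only [AffineMap.lineMap_apply_module]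
  module

lemma re_lt_of_forall_mem_frontier_re_le {F : ℂ → ℂ} {U : Set ℂ} {M : ℝ} {z : ℂ}
    (hU : Bornology.IsBounded U) (hUo : IsOpen U) (hF : DiffContOnCl ℂ F U)
    (hM : ∀ w ∈ frontier U, (F w).re ≤ M) (hz : z ∈ U) (hz' : deriv F z ≠ 0) : (F z).re < M := by
  have hle : ∀ w ∈ U, (F w).re ≤ M := fun w hw => by
    have := norm_le_of_forall_mem_frontier_norm_le hU (differentiable_exp.comp_diffContOnCl hF)
      (C := Real.exp M) (by simpa [norm_exp] using hM) (subset_closure hw)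
    simpa [norm_exp] using this
  refine (hle z hz).lt_of_ne fun heq => hz' ?_
  have hUz : U ∈ 𝓝 z := hUo.mem_nhds hz
  have hmax : IsLocalMax (norm ∘ (exp ∘ F)) z := by
    filter_upwards [hUz] with w hw
    simpa [norm_exp, heq] using hle w hw
  have hconst : exp ∘ F =ᶠ[𝓝 z] fun _ => exp (F z) := by
    refine eventually_eq_of_isLocalMax_norm ?_ hmax
    filter_upwards [hUz] with w hw
    exact differentiableAt_exp.comp w (hF.differentiableAt hUo hw)
  have hder : HasDerivAt (exp ∘ F) (exp (F z) * deriv F z) z :=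
    (hF.differentiableAt hUo hz).hasDerivAt.cexp
  simpa [exp_ne_zero] using hder.unique ((hasDerivAt_const z _).congr_of_eventuallyEq hconst)

lemma exists_exp_eq_of_differentiableOn_ball {k : ℂ → ℂ} {c : ℂ} {r : ℝ}
    (hk : DifferentiableOn ℂ k (ball c r)) (hk0 : ∀ z ∈ ball c r, k z ≠ 0) :
    ∃ L : ℂ → ℂ, ∀ z ∈ ball c r, HasDerivAt L (deriv k z / k z) z ∧ exp (L z) = k z := by
  obtain ⟨L, hL⟩ := ((hk.deriv isOpen_ball).div hk hk0).isExactOn_ball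
  refine ⟨fun z => L z - L c + log (k c), fun z hz => ⟨((hL z hz).sub_const _).add_const _, ?_⟩⟩
  have hc : c ∈ ball c r := mem_ball_self (pos_of_mem_ball hz)
  have hder : ∀ x ∈ ball c r, HasDerivAt (fun x => k x * exp (-L x)) 0 x := fun x hx => by
    convert! (hk.differentiableAt (isOpen_ball.mem_nhds hx)).hasDerivAt.mul (hL x hx).neg.cexp
      using 1
    have := hk0 x hx
    rw [Pi.div_apply]
    field_simp
    ring
  have hconst : k z * exp (-L z) = k c * exp (-L c) :=
    isOpen_ball.is_const_of_deriv_eq_zero (convex_ball c r).isPreconnected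
      (fun x hx => (hder x hx).differentiableAt.differentiableWithinAt)
      (fun x hx => (hder x hx).deriv) hz hc
  calc exp (L z - L c + log (k c)) = exp (L z) * (k c * exp (-L c)) := by
        rw [exp_add, exp_log (hk0 c hc), sub_eq_add_neg, exp_add]; ring
    _ = k z := by rw [← hconst, mul_left_comm, ← exp_add, add_neg_cancel, exp_zero, mul_one]

/-- **Noshiro–Warschawski theorem**. -/
lemma injOn_of_convex_of_re_deriv_pos {ψ ψ' : ℂ → ℂ} {U : Set ℂ} (hU : Convex ℝ U)
    (hψ : ∀ z ∈ U, HasDerivAt ψ (ψ' z) z) (hre : ∀ z ∈ U, 0 < (ψ' z).re) : InjOn ψ U := by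
  intro a ha b hb hab
  by_contra hne
  set γ : ℝ → ℂ := fun t => lineMap a b t with hγ
  have hmem : ∀ t ∈ Icc (0 : ℝ) 1, γ t ∈ U := fun t ht => hU.lineMap_mem ha hb ht
  have hder : ∀ t ∈ Icc (0 : ℝ) 1,
      HasDerivAt (fun t => ⟪b - a, ψ (γ t)⟫) (normSq (b - a) * (ψ' (γ t)).re) t := fun t ht => by
    convert! (hasDerivAt_const t (b - a)).inner ℝ
      ((hψ _ (hmem t ht)).comp t (AffineMap.hasDerivAt_lineMap (a := a) (b := b))) using 1
    simp only [Complex.inner, normSq_apply, mul_re, mul_im, conj_re, conj_im, inner_zero_left]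
    ring
  obtain ⟨t, ht, hzero⟩ := exists_hasDerivAt_eq_zero zero_lt_one
    (fun t ht => (hder t ht).continuousAt.continuousWithinAt) (by simp [hγ, hab])
    fun t ht => hder t (Ioo_subset_Icc_self ht)
  exact (mul_pos (normSq_pos.2 (sub_ne_zero.2 (Ne.symm hne)))
    (hre _ (hmem t (Ioo_subset_Icc_self ht)))).ne' hzero

/-- The Schwarz lemma for the inverse of `f`. -/
lemma ball_mul_subset_image_ball {f : ℂ → ℂ} {c : ℂ} {r κ s : ℝ}
    (hf : DifferentiableOn ℂ f (ball c r)) (hf' : ∀ z ∈ ball c r, deriv f z ≠ 0)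
    (hinj : InjOn f (ball c r)) (hκ : 0 < κ) (hsub : ball (f c) (κ * r) ⊆ f '' ball c r)
    (hs : s ≤ r) : ball (f c) (κ * s) ⊆ f '' ball c s := by
  intro w hw
  have hs0 : 0 < s := pos_of_mul_pos_right (pos_of_mem_ball hw) hκ.le
  have hr : 0 < r := hs0.trans_le hs
  have hwr : w ∈ ball (f c) (κ * r) := ball_subset_ball (by gcongr) hw
  set g := Function.invFunOn f (ball c r)
  have hgf : ∀ z ∈ ball c r, g (f z) = z := fun z hz => hinj.leftInvOn_invFunOn hz
  have hgc : g (f c) = c := hgf c (mem_ball_self hr)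
  have hgd : DifferentiableOn ℂ g (ball (f c) (κ * r)) := by
    refine DifferentiableOn.mono ?_ hsub
    rintro _ ⟨z, hz, rfl⟩
    have hz' := isOpen_ball.mem_nhds hz
    exact ((hf.analyticAt hz').hasStrictDerivAt.to_local_left_inverse (hf' z hz)
      (eventually_of_mem hz' hgf)).hasDerivAt.differentiableAt.differentiableWithinAt
  have hmaps : MapsTo g (ball (f c) (κ * r)) (closedBall (g (f c)) r) := fun v hv =>
    hgc.symm ▸ ball_subset_closedBall (Function.invFunOn_mem (hsub hv))
  refine ⟨g w, ?_, Function.invFunOn_eq (hsub hwr)⟩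
  calc dist (g w) c ≤ r / (κ * r) * dist w (f c) := by
        simpa only [hgc] using dist_le_div_mul_dist_of_mapsTo_ball hgd hmaps hwr
    _ = dist w (f c) / κ := by field_simp
    _ < s := by rwa [div_lt_iff₀' hκ]

/-- Geometrically, the curve lies strictly to the left of its tangent line at `γ a`. -/
lemma inner_I_mul_sub_pos_of_strictMonoOn_angle {γ : ℝ → ℂ} {m A : ℝ → ℝ} {T : ℂ} {a b t : ℝ}
    (hγ : ∀ s ∈ Icc a b, HasDerivAt γ (m s * exp (A s * I) * T) s) (hm : ∀ s ∈ Icc a b, 0 < m s)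
    (hA : StrictMonoOn A (Icc a b)) (hA_maps : MapsTo A (Icc a b) (Icc 0 (2 * π)))
    (hT : T ≠ 0) (hab : γ a = γ b) (ht : t ∈ Ioo a b) : 0 < ⟪I * T, γ t - γ a⟫ := by
  have hsub_left : Icc a t ⊆ Icc a b := Icc_subset_Icc_right ht.2.le
  have hsub_right : Icc t b ⊆ Icc a b := Icc_subset_Icc_left ht.1.le
  set V : ℝ → ℝ := fun s => ⟪I * T, γ s⟫ with hV
  have hVder : ∀ s ∈ Icc a b, HasDerivAt V (normSq T * m s * Real.sin (A s)) s := fun s hs => by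
    convert! (hasDerivAt_const s (I * T)).inner ℝ (hγ s hs) using 1
    rw [← exp_ofReal_mul_I_im]
    simp only [Complex.inner, normSq_apply, mul_re, mul_im, conj_re, conj_im, I_re, I_im,
      ofReal_re, ofReal_im, inner_zero_left]
    ring
  have hVcont : ContinuousOn V (Icc a b) := fun s hs => (hVder s hs).continuousAt.continuousWithinAt
  have hpos : ∀ s ∈ Icc a b, 0 < normSq T * m s := fun s hs => mul_pos (normSq_pos.2 hT) (hm s hs)
  have htmem : t ∈ Icc a b := Ioo_subset_Icc_self ht
  suffices V a < V t by simpa [hV, inner_sub_right] using this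
  rcases le_total (A t) π with hle | hle
  · refine strictMonoOn_of_deriv_pos (convex_Icc a t) (hVcont.mono hsub_left) (fun s hs => ?_)
      (left_mem_Icc.2 ht.1.le) (right_mem_Icc.2 ht.1.le) ht.1
    rw [interior_Icc] at hs
    have hs' := hsub_left (Ioo_subset_Icc_self hs)
    have ha' := left_mem_Icc.2 (ht.1.trans ht.2).le
    rw [(hVder s hs').deriv]
    exact mul_pos (hpos s hs') (Real.sin_pos_of_pos_of_lt_pi
      ((hA_maps ha').1.trans_lt (hA ha' hs' hs.1)) ((hA hs' htmem hs.2).trans_le hle))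
  · rw [show V a = V b by simp only [hV, hab]]
    refine strictAntiOn_of_deriv_neg (convex_Icc t b) (hVcont.mono hsub_right) (fun s hs => ?_)
      (left_mem_Icc.2 ht.2.le) (right_mem_Icc.2 ht.2.le) ht.2
    rw [interior_Icc] at hs
    have hs' := hsub_right (Ioo_subset_Icc_self hs)
    have hb' := right_mem_Icc.2 (ht.1.trans ht.2).le
    have hlower := hle.trans_lt (hA htmem hs' hs.1)
    have hupper := (hA hs' hb' hs.2).trans_le (hA_maps hb').2
    rw [(hVder s hs').deriv, ← Real.sin_sub_two_pi]
    exact mul_neg_of_pos_of_neg (hpos s hs')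
      (Real.sin_neg_of_neg_of_neg_pi_lt (by linarith) (by linarith))

/-- The class `K(0)` on an arbitrary disk, without its normalization: `re_pos` says that the tangent
direction of the image of each circle `|z - c| = s < r` turns counterclockwise, which is the
analytic form of convexity. -/
structure IsConvexMap (f : ℂ → ℂ) (c : ℂ) (r : ℝ) : Prop where
  differentiableOn : DifferentiableOn ℂ f (ball c r)
  deriv_ne_zero : ∀ z ∈ ball c r, deriv f z ≠ 0
  re_pos : ∀ z ∈ ball c r, 0 < (1 + (z - c) * deriv (deriv f) z / deriv f z).re

/-- The analytic form of starlikeness of `h '' ball c r` with respect to `h c`: the classical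
`0 < Re ((z - c) h'(z) / (h z - h c))`, with the quotient cleared of denominators and, through
`dslope`, extended to the centre, where it says that `h' c ≠ 0`. -/
structure IsStarlikeMap (h : ℂ → ℂ) (c : ℂ) (r : ℝ) : Prop where
  differentiableOn : DifferentiableOn ℂ h (ball c r)
  inner_pos : ∀ z ∈ ball c r, 0 < ⟪dslope h c z, deriv h z⟫

namespace IsConvexMap

variable {f : ℂ → ℂ} {c : ℂ} {r : ℝ}

lemma exists_angle_circleMap (hf : IsConvexMap f c r) {R : ℝ} (hR : |R| < r) (θ₀ : ℝ) :
    ∃ m A : ℝ → ℝ, (∀ θ, 0 < m θ) ∧ StrictMono A ∧ A θ₀ = 0 ∧ A (θ₀ + 2 * π) = 2 * π ∧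
      ∀ θ, HasDerivAt (fun θ => f (circleMap c R θ))
        (m θ * exp (A θ * I) * (deriv f (circleMap c R θ₀) * (circleMap 0 R θ₀ * I))) θ := by
  have hmem : ∀ θ, circleMap c R θ ∈ ball c r := fun θ => by
    simpa [dist_eq_norm] using hR
  obtain ⟨L, hL⟩ := exists_exp_eq_of_differentiableOn_ball
    (hf.differentiableOn.deriv isOpen_ball) hf.deriv_ne_zero
  have hf' : ∀ θ, HasDerivAt (fun θ => f (circleMap c R θ))
      (deriv f (circleMap c R θ) * (circleMap 0 R θ * I)) θ := fun θ =>
    (hf.differentiableOn.differentiableAt (isOpen_ball.mem_nhds (hmem θ))).hasDerivAt.comp θ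
      (hasDerivAt_circleMap c R θ)
  set W : ℝ → ℂ := fun θ => L (circleMap c R θ) - L (circleMap c R θ₀) + (θ - θ₀ : ℝ) * I with hW
  have hWder : ∀ θ, HasDerivAt W ((1 + (circleMap c R θ - c) *
      deriv (deriv f) (circleMap c R θ) / deriv f (circleMap c R θ)) * I) θ := fun θ => by
    convert! (((hL _ (hmem θ)).1.comp θ (hasDerivAt_circleMap c R θ)).sub_const
      (L (circleMap c R θ₀))).add (((hasDerivAt_id θ).sub_const θ₀).ofReal_comp.mul_const I) using 1
    rw [circleMap_sub_center, ofReal_one]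
    ring
  have hAder : ∀ θ, HasDerivAt (fun θ => (W θ).im) (1 + (circleMap c R θ - c) *
      deriv (deriv f) (circleMap c R θ) / deriv f (circleMap c R θ)).re θ := fun θ =>
    (imCLM.hasFDerivAt.comp_hasDerivAt θ (hWder θ)).congr_deriv (by simp)
  refine ⟨fun θ => Real.exp (W θ).re, fun θ => (W θ).im, fun θ => Real.exp_pos _,
    strictMono_of_deriv_pos fun θ => (hAder θ).deriv ▸ hf.re_pos _ (hmem θ), by simp [hW],
    by simp [hW, periodic_circleMap c R θ₀], fun θ => ?_⟩
  convert! hf' θ using 1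
  have hrotate : circleMap 0 R θ = exp ((θ - θ₀ : ℝ) * I) * circleMap 0 R θ₀ := by
    rw [circleMap_zero, circleMap_zero, mul_left_comm, ← exp_add]
    push_cast
    ring_nf
  have hpolar : exp (W θ) * deriv f (circleMap c R θ₀)
      = deriv f (circleMap c R θ) * exp ((θ - θ₀ : ℝ) * I) := by
    rw [← (hL _ (hmem θ)).2, ← (hL _ (hmem θ₀)).2, ← exp_add, ← exp_add, hW]
    ring_nf
  rw [ofReal_exp, ← exp_add, re_add_im, ← mul_assoc, hpolar, hrotate]
  ring

lemma inner_sub_pos_of_dist_eq (hf : IsConvexMap f c r) {z ζ : ℂ} (hz : z ∈ ball c r)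
    (hζ : dist ζ c = dist z c) (hne : ζ ≠ z) : 0 < ⟪(z - c) * deriv f z, f z - f ζ⟫ := by
  set R := dist z c with hR
  have hrange : range (circleMap c R) = sphere c R := by
    rw [range_circleMap, abs_of_nonneg dist_nonneg]
  obtain ⟨θ₀, hθ₀⟩ : z ∈ range (circleMap c R) := hrange ▸ hR.symm
  obtain ⟨θ, hθ, rfl⟩ : ζ ∈ circleMap c R '' Ioc θ₀ (θ₀ + 2 * π) := by
    rw [(periodic_circleMap c R).image_Ioc Real.two_pi_pos, hrange]
    exact hζ
  have hθ_ne : θ ≠ θ₀ + 2 * π := by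
    rintro rfl
    exact hne ((periodic_circleMap c R θ₀).trans hθ₀)
  obtain ⟨m, A, hm, hA, hA0, hA2, hder⟩ :=
    hf.exists_angle_circleMap (R := R) (by simpa [abs_of_nonneg dist_nonneg, hR] using hz) θ₀
  have hzc : z - c = circleMap 0 R θ₀ := by rw [← hθ₀, circleMap_sub_center]
  have hzc0 : circleMap 0 R θ₀ ≠ 0 := by
    rw [← hzc, sub_ne_zero]
    rintro rfl
    exact hne (by simp_all)
  have hleft := inner_I_mul_sub_pos_of_strictMonoOn_angle (fun s _ => hder s) (fun s _ => hm s)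
    (hA.strictMonoOn _) (fun s hs => ⟨hA0 ▸ hA.monotone hs.1, hA2 ▸ hA.monotone hs.2⟩)
    (mul_ne_zero (hθ₀ ▸ hf.deriv_ne_zero z hz) (mul_ne_zero hzc0 I_ne_zero))
    (congr_arg f (periodic_circleMap c R θ₀).symm) ⟨hθ.1, hθ.2.lt_of_ne hθ_ne⟩
  rw [hθ₀, ← hzc] at hleft
  have hnormal : I * (deriv f z * ((z - c) * I)) = -((z - c) * deriv f z) := by
    linear_combination deriv f z * (z - c) * I_sq
  rwa [hnormal, inner_neg_left, ← inner_neg_right, neg_sub] at hleft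

/-- The tangent line at `f z` to the image of the circle through `z` is a supporting line of the
image of the closed disk. -/
lemma inner_sub_pos (hf : IsConvexMap f c r) {z ζ : ℂ} (hz : z ∈ ball c r)
    (hζ : dist ζ c ≤ dist z c) (hne : ζ ≠ z) : 0 < ⟪(z - c) * deriv f z, f z - f ζ⟫ := by
  rcases hζ.eq_or_lt with hζ | hζ
  · exact hf.inner_sub_pos_of_dist_eq hz hζ hne
  set n := (z - c) * deriv f z with hn
  have hR : dist z c ≠ 0 := (dist_nonneg.trans_lt hζ).ne'
  have hn0 : n ≠ 0 := mul_ne_zero (sub_ne_zero.2 (dist_ne_zero.1 hR)) (hf.deriv_ne_zero z hz)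
  have hsub : closedBall c (dist z c) ⊆ ball c r := closedBall_subset_ball hz
  have hζr : ζ ∈ ball c r := hsub (mem_closedBall.2 hζ.le)
  have hinner : ∀ w, ⟪n, f w⟫ = (conj n * f w).re := fun w => by rw [Complex.inner, mul_comm]
  rw [inner_sub_right, sub_pos, hinner, hinner]
  refine re_lt_of_forall_mem_frontier_re_le (F := fun w => conj n * f w) isBounded_ball isOpen_ball
    (DifferentiableOn.diffContOnCl ?_) (fun w hw => ?_) (mem_ball.2 hζ) ?_
  · rw [closure_ball c hR]
    exact (hf.differentiableOn.mono hsub).const_mul _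
  · rw [frontier_ball c hR] at hw
    rcases eq_or_ne w z with rfl | hwz
    · rfl
    have := hf.inner_sub_pos_of_dist_eq hz hw hwz
    rw [inner_sub_right, sub_pos, hinner, hinner] at this
    exact this.le
  · rw [deriv_const_mul_field]
    exact mul_ne_zero (by simpa using hn0) (hf.deriv_ne_zero ζ hζr)

lemma injOn (hf : IsConvexMap f c r) : InjOn f (ball c r) := by
  intro a ha b hb hab
  by_contra hne
  rcases le_total (dist a c) (dist b c) with h | h
  · simpa [hab] using hf.inner_sub_pos hb h hne
  · simpa [hab] using hf.inner_sub_pos ha h (Ne.symm hne)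

lemma mul_norm_deriv_le_of_ne (hf : IsConvexMap f c r) {κ : ℝ} (hκ : 0 < κ)
    (hsub : ball (f c) (κ * r) ⊆ f '' ball c r) {z : ℂ} (hz : z ∈ ball c r) (hzc : z ≠ c) :
    κ * ‖deriv f z‖ ≤ ⟪dslope f c z, deriv f z⟫ := by
  have hR : 0 < dist z c := dist_pos.2 hzc
  have hsupport : ∀ w ∈ ball (f c) (κ * dist z c),
      ⟪(z - c) * deriv f z, w⟫ ≤ ⟪(z - c) * deriv f z, f z⟫ := by
    intro w hw
    obtain ⟨ζ, hζ, rfl⟩ := ball_mul_subset_image_ball hf.differentiableOn hf.deriv_ne_zero hf.injOn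
      hκ hsub (mem_ball.1 hz).le hw
    have := hf.inner_sub_pos hz (mem_ball.1 hζ).le (fun h => (h ▸ mem_ball.1 hζ).false)
    rw [inner_sub_right, sub_pos] at this
    exact this.le
  have hdist := inner_add_mul_norm_le_of_forall_mem_ball (mul_pos hκ hR) hsupport
  have hfz : f z = f c + (z - c) * dslope f c z := by
    rw [← smul_eq_mul, sub_smul_dslope]; ring
  have hscale : ⟪(z - c) * deriv f z, (z - c) * dslope f c z⟫ =
      dist z c ^ 2 * ⟪dslope f c z, deriv f z⟫ := by
    rw [dist_eq_norm, ← normSq_eq_norm_sq]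
    simp only [Complex.inner, normSq_apply, mul_re, mul_im, conj_re, conj_im]
    ring
  rw [hfz, inner_add_right, add_le_add_iff_left, hscale, norm_mul, ← dist_eq_norm] at hdist
  exact le_of_mul_le_mul_left (by linarith) (pow_pos hR 2)

/-- By the Schwarz lemma the image of the disk of radius `s` about `c` contains the disk of radius
`κ * s` about `f c`, so its tangent lines keep at least that distance from `f c`. -/
lemma mul_norm_deriv_le (hf : IsConvexMap f c r) {κ : ℝ} (hκ : 0 < κ)
    (hsub : ball (f c) (κ * r) ⊆ f '' ball c r) {z : ℂ} (hz : z ∈ ball c r) :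
    κ * ‖deriv f z‖ ≤ ⟪dslope f c z, deriv f z⟫ := by
  rcases eq_or_ne z c with rfl | hzc
  swap
  · exact hf.mul_norm_deriv_le_of_ne hκ hsub hz hzc
  have hnhds := isOpen_ball.mem_nhds hz
  have hderiv : ContinuousAt (deriv f) z :=
    ((hf.differentiableOn.deriv isOpen_ball).differentiableAt hnhds).continuousAt
  have hdslope : ContinuousAt (dslope f z) z :=
    continuousAt_dslope_same.2 (hf.differentiableOn.differentiableAt hnhds)
  refine le_of_tendsto_of_tendsto (b := 𝓝[≠] z)
    ((hderiv.norm.const_mul κ).mono_left nhdsWithin_le_nhds)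
    ((hdslope.inner hderiv).mono_left nhdsWithin_le_nhds) ?_
  filter_upwards [nhdsWithin_le_nhds hnhds, self_mem_nhdsWithin] with w hw hwz
  exact hf.mul_norm_deriv_le_of_ne hκ hsub hw hwz

end IsConvexMap

namespace IsStarlikeMap

variable {h : ℂ → ℂ} {c : ℂ} {r : ℝ}

lemma const_mul (hh : IsStarlikeMap h c r) {a : ℂ} (ha : a ≠ 0) :
    IsStarlikeMap (fun z => a * h z) c r where
  differentiableOn := hh.differentiableOn.const_mul a
  inner_pos z hz := by
    have hdslope : dslope (fun z => a * h z) c z = a * dslope h c z := by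
      rcases eq_or_ne z c with rfl | hzc
      · simp
      · simp only [dslope_of_ne _ hzc, slope_def_field]
        ring
    rw [hdslope, deriv_const_mul_field]
    have hscale : ⟪a * dslope h c z, a * deriv h z⟫ = normSq a * ⟪dslope h c z, deriv h z⟫ := by
      simp only [Complex.inner, normSq_apply, mul_re, mul_im, conj_re, conj_im]
      ring
    rw [hscale]
    exact mul_pos (normSq_pos.2 ha) (hh.inner_pos z hz)

lemma dslope_ne_zero (hh : IsStarlikeMap h c r) {z : ℂ} (hz : z ∈ ball c r) :
    dslope h c z ≠ 0 := fun h0 => by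
  simpa [h0] using hh.inner_pos z hz

lemma eq_centre_of_apply_eq (hh : IsStarlikeMap h c r) {z : ℂ} (hz : z ∈ ball c r)
    (hzc : h z = h c) : z = c := by
  have hfactor := sub_smul_dslope h c z
  rw [hzc, sub_self, smul_eq_zero] at hfactor
  exact sub_eq_zero.1 (hfactor.resolve_right (hh.dslope_ne_zero hz))

lemma deriv_ne_zero (hh : IsStarlikeMap h c r) {z : ℂ} (hz : z ∈ ball c r) :
    deriv h z ≠ 0 := fun h0 => by
  simpa [h0] using hh.inner_pos z hz

lemma re_deriv_div_dslope_pos (hh : IsStarlikeMap h c r) {z : ℂ} (hz : z ∈ ball c r) :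
    0 < (deriv h z / dslope h c z).re := by
  have hinner := hh.inner_pos z hz
  rw [Complex.inner] at hinner
  rw [div_eq_mul_inv, inv_def, ← mul_assoc, re_mul_ofReal]
  exact mul_pos hinner (inv_pos.2 (normSq_pos.2 (hh.dslope_ne_zero hz)))

lemma differentiableOn_dslope (hh : IsStarlikeMap h c r) :
    DifferentiableOn ℂ (dslope h c) (ball c r) := by
  rcases lt_or_ge 0 r with hr | hr
  · exact (Complex.differentiableOn_dslope (ball_mem_nhds c hr)).2 hh.differentiableOn
  · rw [ball_eq_empty.2 hr]
    exact differentiableOn_empty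

/-- With `z = c + exp ζ`, the function `ψ` is a branch of `log (h z - h c)`. -/
lemma exists_log_sub (hh : IsStarlikeMap h c r) :
    ∃ ψ L : ℂ → ℂ, (∀ ζ, ψ ζ = ζ + L (c + exp ζ)) ∧ ∀ ζ, c + exp ζ ∈ ball c r →
      exp (ψ ζ) = h (c + exp ζ) - h c ∧
      HasDerivAt ψ (deriv h (c + exp ζ) / dslope h c (c + exp ζ)) ζ := by
  obtain ⟨L, hL⟩ := exists_exp_eq_of_differentiableOn_ball hh.differentiableOn_dslope
    fun _ hz => hh.dslope_ne_zero hz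
  refine ⟨fun ζ => ζ + L (c + exp ζ), L, fun _ => rfl, fun ζ hζ => ⟨?_, ?_⟩⟩
  · rw [exp_add, (hL _ hζ).2, ← sub_smul_dslope, add_sub_cancel_left, smul_eq_mul]
  · have hP : HasDerivAt (dslope h c) (deriv (dslope h c) (c + exp ζ)) (c + exp ζ) :=
      (hh.differentiableOn_dslope.differentiableAt (isOpen_ball.mem_nhds hζ)).hasDerivAt
    have hfactor : h = fun z => h c + (z - c) * dslope h c z := by
      ext z
      rw [← smul_eq_mul, sub_smul_dslope, add_sub_cancel]
    have hderiv : deriv h (c + exp ζ)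
        = dslope h c (c + exp ζ) + exp ζ * deriv (dslope h c) (c + exp ζ) := by
      conv_lhs => rw [hfactor]
      simpa using ((((hasDerivAt_id _).sub_const c).mul hP).const_add (h c)).deriv
    have := hh.dslope_ne_zero hζ
    convert! (hasDerivAt_id ζ).add
      ((hL _ hζ).1.comp ζ ((Complex.hasDerivAt_exp ζ).const_add c)) using 1
    rw [hderiv]
    field_simp

/-- `log (h z - h c)`, as a function of `ζ = log (z - c)`, commutes with translation by the period
`2 * π * I` and has a derivative of positive real part on the half-plane `ζ.re < log r`. -/
lemma injOn (hh : IsStarlikeMap h c r) : InjOn h (ball c r) := by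
  obtain ⟨ψ, L, hψ, hψ_log⟩ := hh.exists_log_sub
  rcases le_or_gt r 0 with hr | hr
  · simp [ball_eq_empty.2 hr]
  have hmem : ∀ ζ : ℂ, ζ.re < Real.log r ↔ c + exp ζ ∈ ball c r := fun ζ => by
    rw [Real.lt_log_iff_exp_lt hr, mem_ball, dist_eq_norm, add_sub_cancel_left, norm_exp]
  have hψ_inj : InjOn ψ {ζ | ζ.re < Real.log r} :=
    injOn_of_convex_of_re_deriv_pos (convex_halfSpace_re_lt _)
      (fun ζ hζ => (hψ_log ζ ((hmem ζ).1 hζ)).2)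
      fun ζ hζ => hh.re_deriv_div_dslope_pos ((hmem ζ).1 hζ)
  intro a ha b hb hab
  rcases eq_or_ne a c with rfl | hac
  · exact (hh.eq_centre_of_apply_eq hb hab.symm).symm
  rcases eq_or_ne b c with rfl | hbc
  · exact hh.eq_centre_of_apply_eq ha hab
  have hexp : ∀ {z : ℂ}, z ≠ c → c + exp (log (z - c)) = z := fun hz => by
    rw [exp_log (sub_ne_zero.2 hz), add_sub_cancel]
  set α := log (a - c)
  set β := log (b - c)
  have hα : c + exp α = a := hexp hac
  have hβ : c + exp β = b := hexp hbc
  obtain ⟨n, hn⟩ : ∃ n : ℤ, ψ α = ψ β + n * (2 * π * I) := by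
    rw [← exp_eq_exp_iff_exists_int, (hψ_log α (hα.symm ▸ ha)).1, (hψ_log β (hβ.symm ▸ hb)).1,
      hα, hβ, hab]
  have hperiod : exp (β + n * (2 * π * I)) = exp β := exp_eq_exp_iff_exists_int.2 ⟨n, rfl⟩
  have hαβ : α = β + n * (2 * π * I) := by
    refine hψ_inj ((hmem α).2 (hα.symm ▸ ha)) ((hmem _).2 (by rwa [hperiod, hβ])) ?_
    rw [hn, hψ, hψ, hperiod]
    ring
  rw [← hα, hαβ, hperiod, hβ]

/-- To first order, moving `h z` straight towards `h c` moves `z` towards `c`. -/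
lemma inner_inv_deriv_mul_neg (hh : IsStarlikeMap h c r) {z : ℂ} (hz : z ∈ ball c r)
    (hzc : z ≠ c) : ⟪z - c, (deriv h z)⁻¹ * (h c - h z)⟫ < 0 := by
  have hscale : ⟪z - c, (deriv h z)⁻¹ * (h c - h z)⟫ =
      -(normSq (z - c) * (normSq (deriv h z))⁻¹ * ⟪dslope h c z, deriv h z⟫) := by
    rw [← neg_sub (h z), ← sub_smul_dslope, smul_eq_mul, inv_def]
    simp only [Complex.inner, normSq_apply, mul_re, mul_im, neg_re, neg_im, conj_re, conj_im,
      ofReal_re, ofReal_im]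
    ring
  rw [hscale, neg_neg_iff_pos]
  exact mul_pos (mul_pos (normSq_pos.2 (sub_ne_zero.2 hzc))
    (inv_pos.2 (normSq_pos.2 (hh.deriv_ne_zero hz)))) (hh.inner_pos z hz)

lemma eventually_lineMap_mem_image (hh : IsStarlikeMap h c r) {z : ℂ} (hz : z ∈ ball c r)
    (hzc : z ≠ c) :
    ∀ᶠ τ in 𝓝[>] (0 : ℝ), lineMap (h z) (h c) τ ∈ h '' ball c (dist z c) := by
  have hd0 := hh.deriv_ne_zero hz
  have hs : HasStrictDerivAt h (deriv h z) z :=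
    (hh.differentiableOn.analyticAt (isOpen_ball.mem_nhds hz)).hasStrictDerivAt
  set G := hs.localInverse h (deriv h z) z hd0
  have hGz : G (h z) = z := (hs.eventually_left_inverse hd0).self_of_nhds
  set ℓ : ℝ → ℂ := fun τ => lineMap (h z) (h c) τ
  have hℓ0 : ℓ 0 = h z := AffineMap.lineMap_apply_zero _ _
  have hℓder : HasDerivAt ℓ (h c - h z) 0 := AffineMap.hasDerivAt_lineMap
  have hγ : HasDerivAt (fun τ => G (ℓ τ) - c) ((deriv h z)⁻¹ * (h c - h z)) 0 :=
    ((hs.to_localInverse hd0).hasDerivAt.comp_of_eq 0 hℓder hℓ0.symm).sub_const c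
  have hdist : ∀ᶠ τ in 𝓝[>] (0 : ℝ), ‖G (ℓ τ) - c‖ ^ 2 < ‖z - c‖ ^ 2 := by
    have hnorm := hγ.norm_sq
    rw [hℓ0, hGz] at hnorm
    have hslope := (hasDerivAt_iff_tendsto_slope_left_right.1 hnorm).2.eventually_lt_const
      (mul_neg_of_pos_of_neg two_pos (hh.inner_inv_deriv_mul_neg hz hzc))
    filter_upwards [hslope, self_mem_nhdsWithin] with τ hτ (hτ0 : 0 < τ)
    rw [slope_def_field, div_lt_iff₀ (by simpa), zero_mul, hℓ0, hGz] at hτ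
    exact sub_neg.1 hτ
  have hright : ∀ᶠ τ in 𝓝[>] (0 : ℝ), h (G (ℓ τ)) = ℓ τ := by
    have hinverse := hs.eventually_right_inverse hd0
    rw [← hℓ0] at hinverse
    exact (hℓder.continuousAt.eventually hinverse).filter_mono nhdsWithin_le_nhds
  filter_upwards [hdist, hright] with τ hτ hτG
  refine ⟨G (ℓ τ), ?_, hτG⟩
  rw [mem_ball, dist_eq_norm, dist_eq_norm]
  exact lt_of_pow_lt_pow_left₀ 2 (norm_nonneg _) hτ

lemma starConvex_image_closedBall (hh : IsStarlikeMap h c r) {R : ℝ} (hR : R < r) :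
    StarConvex ℝ (h c) (h '' closedBall c R) := by
  have hsub : closedBall c R ⊆ ball c r := closedBall_subset_ball hR
  have hcompact : IsCompact (h '' closedBall c R) :=
    (isCompact_closedBall c R).image_of_continuousOn (hh.differentiableOn.continuousOn.mono hsub)
  refine starConvex_of_isClosed_of_frequently_lineMap_mem hcompact.isClosed ?_
  rintro _ ⟨z, hz, rfl⟩
  refine Eventually.frequently ?_
  rcases eq_or_ne z c with rfl | hzc
  · exact .of_forall fun τ => by simpa using mem_image_of_mem h hz
  · filter_upwards [hh.eventually_lineMap_mem_image (hsub hz) hzc] with τ hτ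
    exact image_mono (ball_subset_closedBall.trans (closedBall_subset_closedBall hz)) hτ

lemma starConvex_image (hh : IsStarlikeMap h c r) : StarConvex ℝ (h c) (h '' ball c r) := by
  rintro _ ⟨z, hz, rfl⟩ a b ha hb hab
  exact image_mono (closedBall_subset_ball hz) (hh.starConvex_image_closedBall (mem_ball.1 hz)
    (mem_image_of_mem h (mem_closedBall.2 le_rfl)) ha hb hab)

end IsStarlikeMap

section Sum

variable {κ : ℝ} {d p q : ℂ}

lemma re_mul_re_pos_of_mul_norm_le_inner (hd : d ≠ 0) (hle : κ * ‖d‖ ≤ ⟪p, d⟫) (hp : |p.im| < κ) :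
    0 < p.re * d.re := by
  have hcross : p.im * d.im < κ * ‖d‖ :=
    calc p.im * d.im ≤ |p.im| * |d.im| := (le_abs_self _).trans_eq (abs_mul _ _)
      _ ≤ |p.im| * ‖d‖ := by gcongr; exact abs_im_le_norm d
      _ < κ * ‖d‖ := by gcongr
  have hinner : ⟪p, d⟫ = p.re * d.re + p.im * d.im := by
    simp [Complex.inner, mul_comm]
  linarith

lemma inner_add_pos_of_mul_norm_le_inner (hd : d ≠ 0) (hle : κ * ‖d‖ ≤ ⟪p, d⟫) (hp : |p.im| < κ)
    (hq : |q.im| < κ) (hpq : 0 < p.re * q.re) : 0 < ⟪p + q, d⟫ := by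
  have hcross : -(κ * ‖d‖) < q.im * d.im := by
    refine neg_lt_of_abs_lt ?_
    calc |q.im * d.im| = |q.im| * |d.im| := abs_mul _ _
      _ ≤ |q.im| * ‖d‖ := by gcongr; exact abs_im_le_norm d
      _ < κ * ‖d‖ := by gcongr
  have hre : 0 < q.re * d.re := by
    have hpd := re_mul_re_pos_of_mul_norm_le_inner hd hle hp
    refine pos_of_mul_pos_right (a := p.re ^ 2) ?_ (sq_nonneg _)
    calc 0 < p.re * q.re * (p.re * d.re) := mul_pos hpq hpd
      _ = p.re ^ 2 * (q.re * d.re) := by ring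
  have hinner : ⟪q, d⟫ = q.re * d.re + q.im * d.im := by
    simp [Complex.inner, mul_comm]
  rw [inner_add_left]
  linarith

variable {f g : ℂ → ℂ} {c : ℂ} {r : ℝ}

lemma IsConvexMap.re_dslope_ne_zero (hf : IsConvexMap f c r)
    (hfc : ball (f c) (κ * r) ⊆ f '' ball c r) {z : ℂ} (hz : z ∈ ball c r)
    (hfi : |(dslope f c z).im| < κ) : (dslope f c z).re ≠ 0 :=
  left_ne_zero_of_mul (re_mul_re_pos_of_mul_norm_le_inner (hf.deriv_ne_zero z hz)
    (hf.mul_norm_deriv_le ((abs_nonneg _).trans_lt hfi) hfc hz) hfi).ne'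

lemma IsConvexMap.re_dslope_mul_re_dslope_pos (hf : IsConvexMap f c r) (hg : IsConvexMap g c r)
    (hfc : ball (f c) (κ * r) ⊆ f '' ball c r) (hgc : ball (g c) (κ * r) ⊆ g '' ball c r)
    (hfg : 0 < (deriv f c).re * (deriv g c).re)
    (hfi : ∀ z ∈ ball c r, |(dslope f c z).im| < κ)
    (hgi : ∀ z ∈ ball c r, |(dslope g c z).im| < κ) :
    ∀ z ∈ ball c r, 0 < (dslope f c z).re * (dslope g c z).re := by
  intro z hz
  have hc : c ∈ ball c r := mem_ball_self (pos_of_mem_ball hz)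
  have hcont : ∀ {k : ℂ → ℂ}, IsConvexMap k c r →
      ContinuousOn (fun z => (dslope k c z).re) (ball c r) := fun hk =>
    continuous_re.comp_continuousOn
      ((differentiableOn_dslope (isOpen_ball.mem_nhds hc)).2 hk.differentiableOn).continuousOn
  by_contra! hneg
  obtain ⟨w, hw, hw0⟩ := (convex_ball c r).isPreconnected.intermediate_value hz hc
    ((hcont hf).mul (hcont hg)) ⟨hneg, by simpa using hfg.le⟩
  exact mul_ne_zero (hf.re_dslope_ne_zero hfc hw (hfi w hw))
    (hg.re_dslope_ne_zero hgc hw (hgi w hw)) hw0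

/-- The half of the inner product coming from `f'` is positive, because `κ * ‖f'‖` absorbs the
imaginary part of the cross term; the other half is symmetric. -/
lemma IsConvexMap.isStarlikeMap_add (hf : IsConvexMap f c r) (hg : IsConvexMap g c r)
    (hfc : ball (f c) (κ * r) ⊆ f '' ball c r) (hgc : ball (g c) (κ * r) ⊆ g '' ball c r)
    (hfg : 0 < (deriv f c).re * (deriv g c).re)
    (hfi : ∀ z ∈ ball c r, |(dslope f c z).im| < κ)
    (hgi : ∀ z ∈ ball c r, |(dslope g c z).im| < κ) :
    IsStarlikeMap (fun z => f z + g z) c r where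
  differentiableOn := hf.differentiableOn.add hg.differentiableOn
  inner_pos z hz := by
    have hdiff : ∀ {k : ℂ → ℂ}, IsConvexMap k c r → ∀ w ∈ ball c r, DifferentiableAt ℂ k w :=
      fun hk w hw => hk.differentiableOn.differentiableAt (isOpen_ball.mem_nhds hw)
    have hderiv : ∀ w ∈ ball c r, deriv (fun z => f z + g z) w = deriv f w + deriv g w :=
      fun w hw => deriv_fun_add (hdiff hf w hw) (hdiff hg w hw)
    have hdslope : dslope (fun z => f z + g z) c z = dslope f c z + dslope g c z := by
      rcases eq_or_ne z c with rfl | hzc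
      · simpa using hderiv z hz
      · simp only [dslope_of_ne _ hzc, slope_def_field]
        ring
    have hκ : 0 < κ := (abs_nonneg _).trans_lt (hfi z hz)
    have hre := hf.re_dslope_mul_re_dslope_pos hg hfc hgc hfg hfi hgi z hz
    rw [hdslope, hderiv z hz, inner_add_right]
    refine add_pos ?_ ?_
    · exact inner_add_pos_of_mul_norm_le_inner (hf.deriv_ne_zero z hz)
        (hf.mul_norm_deriv_le hκ hfc hz) (hfi z hz) (hgi z hz) hre
    · rw [add_comm]
      exact inner_add_pos_of_mul_norm_le_inner (hg.deriv_ne_zero z hz)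
        (hg.mul_norm_deriv_le hκ hgc hz) (hgi z hz) (hfi z hz) (by rwa [mul_comm])

end Sum

lemma IsConvexOfOrder.isConvexMap {f : ℂ → ℂ} {α : ℝ} (hα : 0 ≤ α) (hf : IsConvexOfOrder α f) :
    IsConvexMap f 0 1 where
  differentiableOn := hf.1
  deriv_ne_zero z hz := (hf.2.2.2 z hz).1
  re_pos z hz := by simpa only [sub_zero] using hα.trans_lt (hf.2.2.2 z hz).2

lemma IsConvexOfOrder.abs_im_dslope_lt {f : ℂ → ℂ} {α ρ : ℝ} (hf : IsConvexOfOrder α f)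
    (hρ : 0 < ρ) (hfi : ∀ z ∈ unitDisk, z ≠ 0 → |(f z / z).im| < ρ) :
    ∀ z ∈ unitDisk, |(dslope f 0 z).im| < ρ := fun z hz => by
  rcases eq_or_ne z 0 with rfl | hz0
  · simpa [hf.2.2.1] using hρ
  · simpa [dslope_of_ne _ hz0, slope_def_field, hf.2.1] using hfi z hz hz0

theorem avg_starlike_of_covering_general {f g : ℂ → ℂ} {c : ℂ} {r κ : ℝ}
    (hf : IsConvexMap f c r) (hg : IsConvexMap g c r)
    (hfc : ball (f c) (κ * r) ⊆ f '' ball c r) (hgc : ball (g c) (κ * r) ⊆ g '' ball c r)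
    (hfg : 0 < (deriv f c).re * (deriv g c).re)
    (hfi : ∀ z ∈ ball c r, |(dslope f c z).im| < κ)
    (hgi : ∀ z ∈ ball c r, |(dslope g c z).im| < κ) :
    InjOn (fun z => (f z + g z) / 2) (ball c r) ∧
      StarConvex ℝ ((f c + g c) / 2) ((fun z => (f z + g z) / 2) '' ball c r) := by
  have havg : IsStarlikeMap (fun z => (f z + g z) / 2) c r := by
    simpa only [div_eq_inv_mul] using
      (hf.isStarlikeMap_add hg hfc hgc hfg hfi hgi).const_mul (inv_ne_zero two_ne_zero)
  exact ⟨havg.injOn, havg.starConvex_image⟩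

/-- if `f, g ∈ K(0)`, both images contain the disk `{|w| < ρ}` and
`|Im(f(z)/z)| < ρ`, `|Im(g(z)/z)| < ρ` on `𝔻 \ {0}`, then `(f+g)/2 ∈ S*`:
it is injective on `𝔻` with image starlike with respect to `0`. -/
theorem avg_starlike_of_covering (ρ : ℝ) (hρ : 0 < ρ) (f g : ℂ → ℂ)
    (hf : IsConvexOfOrder 0 f) (hg : IsConvexOfOrder 0 g)
    (hfc : Metric.ball (0 : ℂ) ρ ⊆ f '' unitDisk)
    (hgc : Metric.ball (0 : ℂ) ρ ⊆ g '' unitDisk)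
    (hfi : ∀ z ∈ unitDisk, z ≠ 0 → |(f z / z).im| < ρ)
    (hgi : ∀ z ∈ unitDisk, z ≠ 0 → |(g z / z).im| < ρ) :
    Set.InjOn (fun z => (f z + g z) / 2) unitDisk ∧
    ∀ w ∈ (fun z => (f z + g z) / 2) '' unitDisk, ∀ t ∈ Set.Icc (0 : ℝ) 1,
      (t : ℂ) * w ∈ (fun z => (f z + g z) / 2) '' unitDisk := by
  have hf0 : f 0 = 0 := hf.2.1
  have hg0 : g 0 = 0 := hg.2.1
  obtain ⟨hinj, hstar⟩ := avg_starlike_of_covering_general (κ := ρ) (hf.isConvexMap le_rfl)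
    (hg.isConvexMap le_rfl) (by rwa [hf0, mul_one]) (by rwa [hg0, mul_one])
    (by simp [hf.2.2.1, hg.2.2.1]) (hf.abs_im_dslope_lt hρ hfi) (hg.abs_im_dslope_lt hρ hgi)
  rw [hf0, hg0, add_zero, zero_div, starConvex_zero_iff] at hstar
  refine ⟨hinj, fun w hw t ht => ?_⟩
  rw [← real_smul]
  exact hstar hw ht.1 ht.2
end
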